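/- For every nonnegative integer n, b^4_{3,2}(16n+9) ≡ 0 (mod 8) and b^4_{3,2}(16n+13) ≡ 0 (mod 8). -/

import Mathlib

/-- `coloredRegular k l m n` is the number of `k`-colored partitions of `n` into parts
divisible by neither `l` nor `m`, i.e. the coefficient of `q^n` in
`∏_{j ≥ 1, l ∤ j, m ∤ j} (1 - q^j)^{-k}`.  A `k`-colored partition is a multiset of
(part, color) pairs, where parts are positive integers not divisible by `l` or `m`
and colors range over `{0, …, k-1}`. -/
noncomputable def coloredRegular (k l m n : ℕ) : ℕ :=
  Nat.card {M : Multiset (ℕ × ℕ) //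
    (∀ x ∈ M, ¬ l ∣ x.1 ∧ ¬ m ∣ x.1 ∧ x.2 < k) ∧ (M.map Prod.fst).sum = n}

open PowerSeries Finset

/-- Odd positive solutions of `a^2+3b^2=4M`. -/
noncomputable def solSet (M : ℕ) : Finset (ℤ × ℤ) :=
  ((Icc (1:ℤ) (4*M)) ×ˢ (Icc (1:ℤ) (4*M))).filter
    (fun p => p.1 % 2 = 1 ∧ p.2 % 2 = 1 ∧ p.1^2 + 3*p.2^2 = 4*M)

lemma mem_solSet (M : ℕ) (p : ℤ × ℤ) : p ∈ solSet M ↔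
    0 < p.1 ∧ 0 < p.2 ∧ p.1 % 2 = 1 ∧ p.2 % 2 = 1 ∧ p.1^2 + 3*p.2^2 = 4*M := by
  simp only [solSet, mem_filter, mem_product, mem_Icc]
  constructor
  · rintro ⟨⟨h1, h2⟩, h3, h4, h5⟩
    exact ⟨by lia, by lia, h3, h4, h5⟩
  · rintro ⟨h1, h2, h3, h4, h5⟩
    refine ⟨⟨⟨by lia, by nlinarith⟩, ⟨by lia, by nlinarith⟩⟩, h3, h4, h5⟩

noncomputable def solInv (p : ℤ × ℤ) : ℤ × ℤ :=
  if 4 ∣ p.1 - p.2 then (|3 * p.2 - p.1| / 2, (p.1 + p.2) / 2)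
  else ((3 * p.2 + p.1) / 2, |p.1 - p.2| / 2)

lemma solInv_spec (M : ℕ) (a b : ℤ) (h : (a, b) ∈ solSet M) :
    solInv (a, b) ∈ solSet M ∧ solInv (solInv (a, b)) = (a, b) ∧
      (solInv (a, b) = (a, b) ↔ a = b ∨ a = 3 * b) := by
  rw [mem_solSet] at h
  obtain ⟨h1, h2, h3, h4, h5⟩ := h
  simp only at h1 h2 h3 h4 h5
  have key : ∀ c d : ℤ, 0 < c → 0 < d → c % 2 = 1 → d % 2 = 1 →
      (4 * c ^ 2 + 12 * d ^ 2 = 4 * (a^2+3*b^2)) → (c, d) ∈ solSet M := by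
    intro c d hc hd hc2 hd2 h
    rw [mem_solSet]
    exact ⟨hc, hd, hc2, hd2, by linarith⟩
  by_cases h4' : 4 ∣ a - b
  · have e1 : solInv (a, b) = (|3 * b - a| / 2, (a + b) / 2) := by simp [solInv, h4']
    obtain ⟨k, hk⟩ := h4'
    obtain rfl : a = b + 4 * k := by lia
    rw [e1]
    have e2 : (b + 4 * k + b) / 2 = b + 2 * k := by lia
    rw [e2]
    rcases abs_cases (3 * b - (b + 4 * k)) with ⟨hh, hs⟩ | ⟨hh, hs⟩
    · have e3 : |3 * b - (b + 4 * k)| / 2 = b - 2 * k := by lia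
      rw [e3]
      refine ⟨key _ _ (by lia) (by lia) (by lia) (by lia) (by ring), ?_, ?_⟩
      · have : (4:ℤ) ∣ (b - 2 * k) - (b + 2 * k) := ⟨-k, by ring⟩
        simp only [solInv, this, if_true, Prod.mk.injEq]
        rw [abs_of_pos (by lia)]
        constructor <;> lia
      · simp only [Prod.mk.injEq]
        lia
    · have e3 : |3 * b - (b + 4 * k)| / 2 = 2 * k - b := by lia
      rw [e3]
      refine ⟨key _ _ (by lia) (by lia) (by lia) (by lia) (by ring), ?_, ?_⟩
      · have : ¬ (4:ℤ) ∣ (2 * k - b) - (b + 2 * k) := by lia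
        simp only [solInv, this, if_false, Prod.mk.injEq]
        rw [abs_of_neg (by lia)]
        constructor <;> lia
      · simp only [Prod.mk.injEq]
        lia
  · have e1 : solInv (a, b) = ((3 * b + a) / 2, |a - b| / 2) := by simp [solInv, h4']
    have h4'' : 4 ∣ a + b := by lia
    obtain ⟨k, hk⟩ := h4''
    obtain rfl : a = 4 * k - b := by lia
    rw [e1]
    have e2 : (3 * b + (4 * k - b)) / 2 = b + 2 * k := by lia
    rw [e2]
    rcases abs_cases (4 * k - b - b) with ⟨hh, hs⟩ | ⟨hh, hs⟩
    · have e3 : |4 * k - b - b| / 2 = 2 * k - b := by lia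
      rw [e3]
      refine ⟨key _ _ (by lia) (by lia) (by lia) (by lia) (by ring), ?_, ?_⟩
      · have : ¬ (4:ℤ) ∣ (b + 2 * k) - (2 * k - b) := by lia
        simp only [solInv, this, if_false, Prod.mk.injEq]
        rw [abs_of_pos (by lia)]
        constructor <;> lia
      · simp only [Prod.mk.injEq]
        lia
    · have e3 : |4 * k - b - b| / 2 = b - 2 * k := by lia
      rw [e3]
      refine ⟨key _ _ (by lia) (by lia) (by lia) (by lia) (by ring), ?_, ?_⟩
      · have : (4:ℤ) ∣ (b + 2 * k) - (b - 2 * k) := ⟨k, by ring⟩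
        simp only [solInv, this, if_true, Prod.mk.injEq]
        rcases abs_cases (3 * (b - 2 * k) - (b + 2 * k)) with ⟨hh, hs⟩ | ⟨hh, hs⟩ <;>
        constructor <;> lia
      · simp only [Prod.mk.injEq]
        lia

open Classical in
lemma solSet_card (M : ℕ) (hM : M % 2 = 1) :
    ((solSet M).card : ZMod 2) =
      (if ∃ s : ℕ, M = s^2 then 1 else 0) + (if ∃ s : ℕ, M = 3 * s^2 then 1 else 0) := by
  have h0 : ∑ p ∈ solSet M, (if p.1 = p.2 ∨ p.1 = 3 * p.2 then (0 : ZMod 2) else 1) = 0 := by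
    refine Finset.sum_involution (fun p _ => solInv p) ?_ ?_ ?_ ?_
    · rintro ⟨a, b⟩ h
      obtain ⟨h1, h2, h3⟩ := solInv_spec M a b h
      obtain ⟨-, -, h6⟩ := solInv_spec M (solInv (a,b)).1 (solInv (a,b)).2 h1
      have : ((solInv (a,b)).1 = (solInv (a,b)).2 ∨ (solInv (a,b)).1 = 3 * (solInv (a,b)).2) ↔
          (a = b ∨ a = 3 * b) := by
        rw [← h6, ← h3, Prod.mk.eta, h2, eq_comm]
      simp only [this]
      split_ifs
      · rfl
      · decide
    · rintro ⟨a, b⟩ h hne heq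
      obtain ⟨h1, h2, h3⟩ := solInv_spec M a b h
      exact hne (if_pos (h3.1 heq))
    · rintro ⟨a, b⟩ h
      exact (solInv_spec M a b h).1
    · rintro ⟨a, b⟩ h
      exact (solInv_spec M a b h).2.1
  have h1 : ((solSet M).card : ZMod 2) =
      ∑ p ∈ solSet M, (if p.1 = p.2 ∨ p.1 = 3 * p.2 then (0 : ZMod 2) else 1)
      + ∑ p ∈ solSet M, (if p.1 = p.2 then (1 : ZMod 2) else 0)
      + ∑ p ∈ solSet M, (if p.1 = 3 * p.2 then (1 : ZMod 2) else 0) := by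
    rw [← sum_add_distrib, ← sum_add_distrib, card_eq_sum_ones, Nat.cast_sum]
    refine sum_congr rfl ?_
    rintro ⟨a, b⟩ h
    rw [mem_solSet] at h
    simp only at h ⊢
    split_ifs <;> first | (exfalso; lia) | simp
  rw [h1, h0, zero_add]
  congr 1
  · split_ifs with h
    · obtain ⟨s, rfl⟩ := h
      have hs : s % 2 = 1 := by
        rcases Nat.mod_two_eq_zero_or_one s with h | h
        · simp [Nat.pow_mod, h] at hM
        · exact h
      rw [sum_eq_single ((s : ℤ), (s : ℤ))]
      · simp
      · rintro ⟨a, b⟩ hab hne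
        rw [mem_solSet] at hab
        simp only at hab ⊢
        rw [if_neg]
        rintro rfl
        apply hne
        have : a = s := by
          have : a ^ 2 = (s:ℤ) ^ 2 := by have := hab.2.2.2.2; push_cast at this; linarith
          exact (pow_left_inj₀ (by lia) (by lia) two_ne_zero).1 this
        rw [this]
      · intro hn
        exfalso
        apply hn
        rw [mem_solSet]
        refine ⟨by simp; lia, by simp; lia, by simp; lia, by simp; lia, by push_cast; ring⟩
    · apply sum_eq_zero
      rintro ⟨a, b⟩ hab
      rw [mem_solSet] at hab
      simp only at hab ⊢
      rw [if_neg]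
      rintro rfl
      apply h
      refine ⟨a.toNat, ?_⟩
      zify
      rw [Int.toNat_of_nonneg (by lia)]
      linarith [hab.2.2.2.2]
  · split_ifs with h
    · obtain ⟨s, rfl⟩ := h
      have hs : s % 2 = 1 := by
        rcases Nat.mod_two_eq_zero_or_one s with h | h
        · simp [Nat.mul_mod, Nat.pow_mod, h] at hM
        · exact h
      rw [sum_eq_single (3 * (s : ℤ), (s : ℤ))]
      · simp
      · rintro ⟨a, b⟩ hab hne
        rw [mem_solSet] at hab
        simp only at hab ⊢
        rw [if_neg]
        rintro rfl
        apply hne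
        have : b = s := by
          have : b ^ 2 = (s:ℤ) ^ 2 := by have := hab.2.2.2.2; push_cast at this; linarith
          exact (pow_left_inj₀ (by lia) (by lia) two_ne_zero).1 this
        rw [this]
      · intro hn
        exfalso
        apply hn
        rw [mem_solSet]
        refine ⟨by simp; lia, by simp; lia, by simp; lia, by simp; lia, by push_cast; ring⟩
    · apply sum_eq_zero
      rintro ⟨a, b⟩ hab
      rw [mem_solSet] at hab
      simp only at hab ⊢
      rw [if_neg]
      rintro rfl
      apply h
      refine ⟨b.toNat, ?_⟩
      zify
      rw [Int.toNat_of_nonneg (by lia)]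
      linarith [hab.2.2.2.2]

lemma sq_eq_expand (f : (PowerSeries (ZMod 2))) (k : ℕ) :
    f ^ 2 ^ k = expand (2 ^ k) (by positivity) f := by
  have h := MvPowerSeries.map_iterateFrobenius_expand 2 two_ne_zero (R := ZMod 2) f k
  have h2 : iterateFrobenius (ZMod 2) 2 k = RingHom.id _ := Subsingleton.elim _ _
  rw [h2, MvPowerSeries.map_id] at h
  exact h.symm

lemma coeff_pow_two_pow (f : (PowerSeries (ZMod 2))) (k n : ℕ) (h : ¬ 2 ^ k ∣ n) : coeff n (f ^ 2 ^ k) = 0 := by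
  rw [sq_eq_expand]
  exact coeff_expand_of_not_dvd _ _ _ h

open Classical in
noncomputable def psi : (PowerSeries (ZMod 2)) := PowerSeries.mk fun n => if ∃ s : ℕ, 8 * n + 1 = s ^ 2 then 1 else 0

noncomputable def pent : (PowerSeries (ZMod 2)) := pentagonalSeries (ZMod 2)

lemma mem_range_pentagonal (n : ℕ) : n ∈ Set.range pentagonal ↔ ∃ s : ℕ, 24 * n + 1 = s ^ 2 := by
  constructor
  · rintro ⟨k, rfl⟩
    refine ⟨(6 * k - 1).natAbs, ?_⟩
    zify
    rw [sq_abs]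
    linear_combination 12 * two_mul_natCast_pentagonal k
  · rintro ⟨s, hs⟩
    have h6 : s % 6 = 1 ∨ s % 6 = 5 := by
      have h2 : s ^ 2 % 6 = 1 := by lia
      rw [Nat.pow_mod] at h2
      have : s % 6 < 6 := Nat.mod_lt _ (by norm_num)
      interval_cases s % 6 <;> simp_all
    have main : ∀ k : ℤ, (6 * k - 1) ^ 2 = (s : ℤ) ^ 2 → n ∈ Set.range pentagonal := by
      intro k hk
      refine ⟨k, ?_⟩
      have := two_mul_natCast_pentagonal k
      zify at hs ⊢
      linarith
    rcases h6 with h | h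
    · obtain ⟨k, rfl⟩ : ∃ k, s = 6 * k + 1 := ⟨s / 6, by lia⟩
      exact main (-k) (by push_cast; ring)
    · obtain ⟨k, rfl⟩ : ∃ k, s = 6 * k + 5 := ⟨s / 6, by lia⟩
      exact main (k + 1) (by push_cast; ring)

open Classical in
lemma coeff_pent (n : ℕ) : coeff n pent = if ∃ s : ℕ, 24 * n + 1 = s ^ 2 then 1 else 0 := by
  split_ifs with h
  · rw [← mem_range_pentagonal] at h
    have : coeff n pent ≠ 0 := by
      rw [pent, Ne, coeff_pentagonalSeries_eq_zero_iff, not_not]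
      exact h
    revert this
    generalize coeff n pent = x
    revert x
    decide
  · rw [← mem_range_pentagonal] at h
    exact coeff_pentagonalSeries_eq_zero _ h

lemma odd_sq (s : ℕ) (h : s % 2 = 1) : ∃ t, s ^ 2 = 8 * t + 1 := by
  obtain ⟨k, rfl⟩ : ∃ k, s = 2 * k + 1 := ⟨s / 2, by lia⟩
  obtain ⟨m, hm⟩ := (Nat.even_mul_succ_self k).two_dvd
  refine ⟨m, ?_⟩
  linarith

lemma odd_of_odd_sq (s : ℕ) (h : s ^ 2 % 2 = 1) : s % 2 = 1 := by
  rcases Nat.mod_two_eq_zero_or_one s with h' | h'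
  · simp [Nat.pow_mod, h'] at h
  · exact h'

lemma odd_of_odd_sq_int (a : ℤ) (h : a % 2 = 1) : ∃ t, a ^ 2 = 8 * t + 1 := by
  obtain ⟨k, rfl⟩ : ∃ k, a = 2 * k + 1 := ⟨a / 2, by lia⟩
  obtain ⟨m, hm⟩ := (Int.even_mul_succ_self k).two_dvd
  exact ⟨m, by linarith⟩

open Classical in
/-- Transfer from antidiagonal sums to `solSet`. -/
lemma antidiag_solSet (c n M : ℕ) (hc : c = 8 ∨ c = 24) (hM : c * n + 4 = 4 * M) :
    ∑ p ∈ antidiagonal n, (if (∃ a : ℕ, c * p.1 + 1 = a ^ 2) ∧ (∃ b : ℕ, c * p.2 + 3 = 3 * b ^ 2)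
      then (1 : ZMod 2) else 0) = ((solSet M).card : ZMod 2) := by
  rw [sum_boole]
  congr 1
  symm
  have key : ∀ a b : ℤ, (a, b) ∈ solSet M → ∃ i j : ℕ, c * i + 1 = a ^ 2 ∧ c * j + 3 = 3 * b ^ 2 ∧
      i + j = n := by
    intro a b h
    rw [mem_solSet] at h
    obtain ⟨h1, h2, h3, h4, h5⟩ := h
    simp only at h1 h2 h3 h4 h5
    obtain ⟨t, ht⟩ := odd_of_odd_sq_int a h3
    obtain ⟨u, hu⟩ := odd_of_odd_sq_int b h4
    have ht0 : 0 ≤ t := by nlinarith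
    have hu0 : 0 ≤ u := by nlinarith
    lift t to ℕ using ht0
    lift u to ℕ using hu0
    rcases hc with rfl | rfl
    · refine ⟨t, 3 * u, by rw [ht]; push_cast; ring, by rw [hu]; push_cast; ring, ?_⟩
      rw [ht, hu] at h5
      lia
    · have : t % 3 = 0 := by lia
      refine ⟨t / 3, u, ?_, by rw [hu]; push_cast; ring, ?_⟩
      · rw [ht]; push_cast; lia
      · rw [ht, hu] at h5
        lia
  have hc0 : (c : ℤ) ≠ 0 := by rcases hc with rfl | rfl <;> norm_num
  have keyi : ∀ a b : ℤ, (a, b) ∈ solSet M →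
      c * (((a ^ 2 - 1) / c).toNat : ℤ) + 1 = a ^ 2 ∧
      c * (((3 * b ^ 2 - 3) / c).toNat : ℤ) + 3 = 3 * b ^ 2 ∧
      ((a ^ 2 - 1) / c).toNat + ((3 * b ^ 2 - 3) / c).toNat = n := by
    intro a b h
    obtain ⟨i, j, h1, h2, h3⟩ := key a b h
    have e1 : (a ^ 2 - 1) / c = i := by
      rw [← h1, add_sub_cancel_right, Int.mul_ediv_cancel_left _ hc0]
    have e2 : (3 * b ^ 2 - 3) / c = j := by
      rw [← h2, add_sub_cancel_right, Int.mul_ediv_cancel_left _ hc0]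
    rw [e1, e2]
    simpa using ⟨h1, h2, h3⟩
  refine card_bij (fun p _ => (((p.1 ^ 2 - 1) / c).toNat, ((3 * p.2 ^ 2 - 3) / c).toNat)) ?_ ?_ ?_
  · rintro ⟨a, b⟩ h
    obtain ⟨h1, h2, h3⟩ := keyi a b h
    rw [mem_solSet] at h
    simp only [mem_filter, HasAntidiagonal.mem_antidiagonal]
    refine ⟨h3, ⟨a.natAbs, ?_⟩, ⟨b.natAbs, ?_⟩⟩
    · zify
      rw [sq_abs]; exact h1
    · zify
      rw [sq_abs]; exact h2
  · rintro ⟨a, b⟩ h ⟨a', b'⟩ h' heq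
    simp only [Prod.mk.injEq] at heq
    obtain ⟨h1, h2, -⟩ := keyi a b h
    obtain ⟨h1', h2', -⟩ := keyi a' b' h'
    rw [heq.1, h1'] at h1
    rw [heq.2, h2'] at h2
    rw [mem_solSet] at h h'
    simp only at h h'
    have e1 : a = a' := (pow_left_inj₀ (by lia) (by lia) two_ne_zero).1 h1.symm
    have e2 : b = b' := (pow_left_inj₀ (by lia) (by lia) two_ne_zero).1
      (by linarith : b ^ 2 = b' ^ 2)
    rw [e1, e2]
  · rintro ⟨i, j⟩ h
    simp only [mem_filter, HasAntidiagonal.mem_antidiagonal] at h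
    obtain ⟨hij, ⟨a, ha⟩, ⟨b, hb⟩⟩ := h
    have hc2 : ∃ d, c = 2 * d := by rcases hc with rfl | rfl; exacts [⟨4, rfl⟩, ⟨12, rfl⟩]
    obtain ⟨d, hd⟩ := hc2
    have ha2 : a % 2 = 1 := by
      apply odd_of_odd_sq
      rw [← ha, hd, mul_assoc]; lia
    have hb2 : b % 2 = 1 := by
      apply odd_of_odd_sq
      rw [hd, mul_assoc] at hb; lia
    have hmem : ((a : ℤ), (b : ℤ)) ∈ solSet M := by
      rw [mem_solSet]
      refine ⟨by simp; lia, by simp; lia, by simp; lia, by simp; lia, ?_⟩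
      simp only
      have : a ^ 2 + 3 * b ^ 2 = 4 * M := by
        rw [← ha, ← hb, ← hM, ← hij]; ring
      exact_mod_cast this
    refine ⟨((a : ℤ), (b : ℤ)), hmem, ?_⟩
    obtain ⟨h1, h2, -⟩ := keyi _ _ hmem
    simp only [Prod.mk.injEq]
    zify at ha hb
    constructor
    · have : (c : ℤ) * (((((a:ℤ) ^ 2 - 1) / c).toNat : ℕ) : ℤ) = c * (i : ℤ) := by linarith
      exact_mod_cast mul_left_cancel₀ hc0 this
    · have : (c : ℤ) * ((((3 * (b:ℤ) ^ 2 - 3) / c).toNat : ℕ) : ℤ) = c * (j : ℤ) := by linarith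
      exact_mod_cast mul_left_cancel₀ hc0 this

/-- `ψ(q) ψ(q³) = ψ(q⁴) + q ψ(q¹²)` modulo 2. -/
lemma psi_mul_psi3 : psi * expand 3 (by norm_num) psi =
    psi ^ 4 + X * (expand 3 (by norm_num) psi) ^ 4 := by
  classical
  have e4 := sq_eq_expand psi 2
  have e12 := sq_eq_expand (expand 3 (by norm_num) psi) 2
  norm_num at e4 e12
  rw [e4, e12, ← expand_mul]
  norm_num
  ext n
  rw [coeff_mul, map_add]
  have hL : ∑ p ∈ antidiagonal n, coeff p.1 psi * coeff p.2 (expand 3 (by norm_num) psi) =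
      ∑ p ∈ antidiagonal n, (if (∃ a : ℕ, 8 * p.1 + 1 = a ^ 2) ∧
        (∃ b : ℕ, 8 * p.2 + 3 = 3 * b ^ 2) then (1 : ZMod 2) else 0) := by
    refine sum_congr rfl ?_
    rintro ⟨i, j⟩ -
    have : coeff j (expand 3 (by norm_num) psi) =
        if (∃ b : ℕ, 8 * j + 3 = 3 * b ^ 2) then (1 : ZMod 2) else 0 := by
      rw [coeff_expand]
      by_cases h3 : 3 ∣ j
      · obtain ⟨k, rfl⟩ := h3
        rw [if_pos (dvd_mul_right _ _), psi, coeff_mk, Nat.mul_div_cancel_left _ (by norm_num)]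
        refine if_congr (exists_congr fun s => ?_) rfl rfl
        constructor <;> intro h <;> lia
      · rw [if_neg h3, if_neg]
        rintro ⟨b, hb⟩
        lia
    rw [this, psi, coeff_mk, ite_and]
    split_ifs <;> simp
  rw [hL, antidiag_solSet 8 n (2 * n + 1) (Or.inl rfl) (by ring), solSet_card _ (by lia)]
  congr 1
  · rw [coeff_expand]
    by_cases h4 : 4 ∣ n
    · obtain ⟨k, rfl⟩ := h4
      rw [if_pos (dvd_mul_right _ _), psi, coeff_mk, Nat.mul_div_cancel_left _ (by norm_num)]
      refine if_congr (exists_congr fun s => ?_) rfl rfl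
      constructor <;> intro h <;> lia
    · rw [if_neg h4, if_neg]
      rintro ⟨s, hs⟩
      obtain ⟨t, ht⟩ := odd_sq s (odd_of_odd_sq s (by lia))
      lia
  · rcases n with _ | n
    · rw [coeff_zero_X_mul, if_neg]
      rintro ⟨s, hs⟩
      lia
    · rw [coeff_succ_X_mul, coeff_expand]
      by_cases h4 : 12 ∣ n
      · obtain ⟨k, rfl⟩ := h4
        rw [if_pos (dvd_mul_right _ _), psi, coeff_mk, Nat.mul_div_cancel_left _ (by norm_num)]
        refine if_congr (exists_congr fun s => ?_) rfl rfl
        constructor <;> intro h <;> lia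
      · rw [if_neg h4, if_neg]
        rintro ⟨s, hs⟩
        obtain ⟨t, ht⟩ := odd_sq s (odd_of_odd_sq s (by lia))
        lia

lemma pent_mul_psi : pent * psi = pent ^ 4 := by
  classical
  have e4 := sq_eq_expand pent 2
  norm_num at e4
  rw [e4]
  ext n
  rw [coeff_mul]
  have hL : ∑ p ∈ antidiagonal n, coeff p.1 pent * coeff p.2 psi =
      ∑ p ∈ antidiagonal n, (if (∃ a : ℕ, 24 * p.1 + 1 = a ^ 2) ∧
        (∃ b : ℕ, 24 * p.2 + 3 = 3 * b ^ 2) then (1 : ZMod 2) else 0) := by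
    refine sum_congr rfl ?_
    rintro ⟨i, j⟩ -
    have : coeff j psi =
        if (∃ b : ℕ, 24 * j + 3 = 3 * b ^ 2) then (1 : ZMod 2) else 0 := by
      rw [psi, coeff_mk]
      refine if_congr (exists_congr fun s => ?_) rfl rfl
      constructor <;> intro h <;> lia
    rw [this, coeff_pent, ite_and]
    split_ifs <;> simp
  rw [hL, antidiag_solSet 24 n (6 * n + 1) (Or.inr rfl) (by ring), solSet_card _ (by lia)]
  rw [if_neg (c := ∃ s, 6 * n + 1 = 3 * s ^ 2), add_zero]
  · rw [coeff_expand]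
    by_cases h4 : 4 ∣ n
    · obtain ⟨k, rfl⟩ := h4
      rw [if_pos (dvd_mul_right _ _), coeff_pent, Nat.mul_div_cancel_left _ (by norm_num)]
      refine if_congr (exists_congr fun s => ?_) rfl rfl
      constructor <;> intro h <;> lia
    · rw [if_neg h4, if_neg]
      rintro ⟨s, hs⟩
      obtain ⟨t, ht⟩ := odd_sq s (odd_of_odd_sq s (by lia))
      lia
  · rintro ⟨s, hs⟩
    lia

lemma psi_ne_zero : psi ≠ 0 := by
  intro h
  have : coeff 0 psi = 0 := by rw [h]; simp
  rw [psi, coeff_mk, if_pos ⟨1, rfl⟩] at this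
  exact one_ne_zero this

lemma pent_ne_zero : pent ≠ 0 := by
  intro h
  have : coeff 0 pent = 0 := by rw [h]; simp
  rw [coeff_pent, if_pos ⟨1, rfl⟩] at this
  exact one_ne_zero this

lemma psi_eq : psi = pent ^ 3 := by
  apply mul_left_cancel₀ pent_ne_zero
  rw [pent_mul_psi]; ring

lemma psi_isUnit : IsUnit psi := by
  rw [isUnit_iff_constantCoeff, ← coeff_zero_eq_constantCoeff_apply, psi, coeff_mk, if_pos ⟨1, rfl⟩]
  exact isUnit_one

/-- Final computation modulo 2. -/
lemma final_mod_two (G E : (PowerSeries (ZMod 2))) (hGC : G * E = 1)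
    (hC : E * pent = expand 3 (by norm_num) pent) (n : ℕ) (hn : n % 16 = 8 ∨ n % 16 = 12) :
    coeff n (G ^ 3 * d⁄dX (ZMod 2) G) = 0 := by
  set t := expand 3 (by norm_num) psi with ht
  obtain ⟨I, hI⟩ := psi_isUnit.exists_right_inv
  have h1 : G ^ 3 * t = psi := by
    rw [ht, psi_eq, map_pow, ← hC]
    linear_combination (pent ^ 3 * (G ^ 2 * E ^ 2 + G * E + 1)) * hGC
  have h2 : psi * t = psi ^ 4 + X * t ^ 4 := psi_mul_psi3
  have h3 : G * psi ^ 2 = G ^ 4 * (psi ^ 4 + X * t ^ 4) := by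
    rw [← h2]
    linear_combination (- G * psi) * h1
  have c2 : (2 : (PowerSeries (ZMod 2))) = 0 := by
    have : ((2 : ZMod 2)) = 0 := rfl
    have h := congrArg (PowerSeries.C (R := ZMod 2)) this
    rwa [map_ofNat, map_zero] at h
  have h4 : d⁄dX (ZMod 2) G * psi ^ 2 = G ^ 4 * t ^ 4 := by
    have := congrArg (d⁄dX (ZMod 2)) h3
    simp only [Derivation.leibniz, derivative_pow, map_add, smul_eq_mul, derivative_X] at this
    push_cast at this
    linear_combination this + (- G * psi * d⁄dX (ZMod 2) psi
      + G ^ 4 * (2 * psi ^ 3 * d⁄dX (ZMod 2) psi + 2 * X * t ^ 3 * d⁄dX (ZMod 2) t)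
      + (psi ^ 4 + X * t ^ 4) * 2 * G ^ 3 * d⁄dX (ZMod 2) G) * c2
  have h5 : G ^ 3 * d⁄dX (ZMod 2) G =
      (G * psi) ^ 2 ^ 4 + X ^ 4 * (G * t) ^ 2 ^ 4 + X ^ 2 * (G * t ^ 2) ^ 2 ^ 2
        + X * (G ^ 2 * t ^ 3 * I) ^ 2 ^ 1 := by
    have s1 : G ^ 3 * d⁄dX (ZMod 2) G = G ^ 4 * t ^ 3 * I := by
      calc G ^ 3 * d⁄dX (ZMod 2) G = G ^ 3 * (d⁄dX (ZMod 2) G * psi ^ 2) * I ^ 2 := by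
            linear_combination (- G ^ 3 * d⁄dX (ZMod 2) G * (psi * I + 1)) * hI
        _ = G ^ 4 * (G ^ 3 * t) * t ^ 3 * I ^ 2 := by rw [h4]; ring
        _ = G ^ 4 * t ^ 3 * I * (psi * I) := by rw [h1]; ring
        _ = _ := by rw [hI, mul_one]
    have s2 : G ^ 4 * t ^ 3 * I = G ^ 4 * t ^ 2 * I ^ 2 * (psi * t) := by
      linear_combination (- G ^ 4 * t ^ 3 * I) * hI
    have s3 : G ^ 4 * t ^ 2 * I ^ 2 * (psi * t) = G ^ 4 * (psi * t) ^ 2 +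
        X * (G ^ 2 * t ^ 3 * I) ^ 2 := by
      calc _ = G ^ 4 * t ^ 2 * (psi * (psi * I)) ^ 2 + X * (G ^ 2 * t ^ 3 * I) ^ 2 := by
            rw [h2]; ring
        _ = _ := by rw [hI]; ring
    have s4 : G ^ 4 * (psi * t) ^ 2 = (G * psi ^ 2) ^ 4 + X ^ 2 * (G * t ^ 2) ^ 4 := by
      rw [h2]
      linear_combination (G ^ 4 * X * psi ^ 4 * t ^ 4) * c2
    have s5 : (G * psi ^ 2) ^ 4 = (G ^ 4 * psi ^ 4) ^ 4 + X ^ 4 * (G * t) ^ 16 := by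
      rw [h3]
      linear_combination (G ^ 16 * (2 * psi ^ 12 * X * t ^ 4 + 3 * psi ^ 8 * X ^ 2 * t ^ 8
        + 2 * psi ^ 4 * X ^ 3 * t ^ 12)) * c2
    rw [s1, s2, s3, s4, s5]
    ring
  rw [h5]
  have z : ∀ (f : (PowerSeries (ZMod 2))) (a k : ℕ), (n < a ∨ ¬ 2 ^ k ∣ n - a) → coeff n (X ^ a * f ^ 2 ^ k) = 0 := by
    intro f a k h
    rw [coeff_X_pow_mul']
    split_ifs with h'
    · exact coeff_pow_two_pow _ _ _ (by lia)
    · rfl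
  have z0 := z (G * psi) 0 4 (by right; norm_num; lia)
  have z1 := z (G * t) 4 4 (by right; norm_num; lia)
  have z2 := z (G * t ^ 2) 2 2 (by right; norm_num; lia)
  have z3 := z (G ^ 2 * t ^ 3 * I) 1 1 (by right; norm_num; lia)
  rw [pow_zero, one_mul] at z0
  rw [pow_one] at z3
  rw [map_add, map_add, map_add, z0, z1, z2, z3]
  simp

section prods
open Filter Topology PowerSeries.WithPiTopology

open Classical in
noncomputable def fac (p : ℕ → Prop) (i : ℕ) : PowerSeries ℤ :=
  if p (i + 1) then 1 - X ^ (i + 1) else 1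

lemma multipliable_fac (p : ℕ → Prop) : Multipliable (fac p) := by
  classical
  have : fac p = fun i => 1 + (if p (i + 1) then - X ^ (i + 1) else 0) := by
    funext i
    unfold fac
    split_ifs
    · ring
    · simp
  rw [this]
  apply multipliable_one_add_of_tendsto_order_atTop_nhds_top
  refine ENat.tendsto_nhds_top_iff_natCast_lt.mpr fun n ↦ eventually_atTop.mpr ⟨n + 1, ?_⟩
  intro m hm
  split_ifs
  · rw [order_neg, order_X_pow]
    norm_cast
    lia
  · simp

noncomputable def E (p : ℕ → Prop) : PowerSeries ℤ := ∏' i, fac p i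

lemma hasProd_E (p : ℕ → Prop) : HasProd (fac p) (E p) := (multipliable_fac p).hasProd

lemma E_split (p q : ℕ → Prop) : E p = E (fun j => p j ∧ ¬ q j) * E (fun j => p j ∧ q j) := by
  have h := (hasProd_E (fun j => p j ∧ ¬ q j)).mul (hasProd_E (fun j => p j ∧ q j))
  refine HasProd.unique (hasProd_E p) ?_
  convert h using 1
  funext i
  by_cases hp : p (i + 1) <;> by_cases hq : q (i + 1) <;> simp [fac, hp, hq]

lemma hasProd_expand (d : ℕ) (hd : d ≠ 0) (f : ℕ → PowerSeries ℤ) (g : PowerSeries ℤ)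
    (h : HasProd f g) : HasProd (fun i => expand d hd (f i)) (expand d hd g) := by
  rw [HasProd, tendsto_iff_coeff_tendsto] at h ⊢
  intro n
  simp only [← map_prod, coeff_expand]
  split_ifs with hn
  · exact h (n / d)
  · exact tendsto_const_nhds

lemma E_dvd (d : ℕ) (hd : d ≠ 0) (p : ℕ → Prop) :
    E (fun j => p (j / d) ∧ d ∣ j) = expand d hd (E p) := by
  refine HasProd.unique (hasProd_E _) ?_
  have h := hasProd_expand d hd _ _ (hasProd_E p)
  have hpos : 0 < d := Nat.pos_of_ne_zero hd
  have key : ∀ i, d * (i + 1) - 1 + 1 = d * (i + 1) := fun i => by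
    have : 0 < d * (i + 1) := by positivity
    lia
  have hinj : Function.Injective (fun i => d * (i + 1) - 1) := by
    intro i j hij
    simp only at hij
    have h1 := key i
    rw [hij, key j] at h1
    have := Nat.eq_of_mul_eq_mul_left hpos h1
    lia
  rw [← hinj.hasProd_iff]
  · convert h using 1
    funext i
    have hiff : (p ((d * (i + 1) - 1 + 1) / d) ∧ d ∣ d * (i + 1) - 1 + 1) ↔ p (i + 1) := by
      rw [key, Nat.mul_div_cancel_left _ hpos]
      simp
    show fac _ (d * (i + 1) - 1) = expand d hd (fac p i)
    unfold fac
    by_cases hp : p (i + 1)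
    · rw [if_pos (hiff.2 hp), if_pos hp, key]
      simp [pow_mul]
    · rw [if_neg (fun h => hp (hiff.1 h)), if_neg hp]
      simp
  · intro x hx
    unfold fac
    rw [if_neg]
    rintro ⟨-, k, hk⟩
    apply hx
    rcases k with _ | k
    · simp at hk
    · exact ⟨k, by simp only; lia⟩

lemma E_true : E (fun _ => True) = pentagonalSeries ℤ := by
  refine HasProd.unique (hasProd_E _) ?_
  convert hasProd_one_sub_X_pow ℤ using 1
  funext i
  simp [fac]

lemma E_congr (p q : ℕ → Prop) (h : ∀ j, p j ↔ q j) : E p = E q := by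
  have : p = q := funext fun j => propext (h j)
  rw [this]

def cop (j : ℕ) : Prop := ¬ 3 ∣ j ∧ ¬ 2 ∣ j

lemma map_E_cop : PowerSeries.map (Int.castRingHom (ZMod 2)) (E cop) * pent = expand 3 (by norm_num) pent := by
  have hP : PowerSeries.map (Int.castRingHom (ZMod 2)) (E (fun _ => True)) = pent := by
    rw [E_true]
    ext n
    rw [coeff_map, pent]
    by_cases h : n ∈ Set.range pentagonal
    · obtain ⟨k, rfl⟩ := h
      rw [coeff_pentagonalSeries_pentagonal, coeff_pentagonalSeries_pentagonal]
      simp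
    · rw [coeff_pentagonalSeries_eq_zero _ h, coeff_pentagonalSeries_eq_zero _ h, map_zero]
  have h1 : E (fun _ => True) = E (fun j => ¬ 2 ∣ j) * expand 2 (by norm_num) (E (fun _ => True)) := by
    rw [← E_dvd]
    rw [E_split (fun _ => True) (fun j => 2 ∣ j)]
    simp
  have h2 : E (fun j => ¬ 2 ∣ j) = E cop * expand 3 (by norm_num) (E (fun j => ¬ 2 ∣ j)) := by
    rw [← E_dvd]
    conv_lhs => rw [E_split (fun j => ¬ 2 ∣ j) (fun j => 3 ∣ j)]
    congr 1
    · exact E_congr _ _ fun j => by simp only [cop]; tauto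
    · exact E_congr _ _ fun j => by lia
  apply_fun PowerSeries.map (Int.castRingHom (ZMod 2)) at h1 h2
  rw [map_mul, map_expand, hP] at h1
  rw [map_mul, map_expand] at h2
  generalize PowerSeries.map (Int.castRingHom (ZMod 2)) (E (fun j => ¬ 2 ∣ j)) = O at h1 h2
  have e2 := sq_eq_expand pent 1
  norm_num at e2
  rw [← e2] at h1
  have h3 : O * pent = 1 := by
    apply mul_left_cancel₀ pent_ne_zero
    linear_combination - h1
  have h4 := congrArg (expand 3 (by norm_num)) h3
  rw [map_mul, map_one] at h4
  linear_combination (- PowerSeries.map (Int.castRingHom (ZMod 2)) (E cop) * pent) * h4 + expand 3 (by norm_num) pent * h3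
    - (expand 3 (by norm_num) pent * pent) * h2

end prods

section counting

def T (S : Finset (ℕ × ℕ)) (n : ℕ) : Set (Multiset (ℕ × ℕ)) :=
  {M | (∀ x ∈ M, x ∈ S) ∧ (M.map Prod.fst).sum = n}

lemma T_finite (S : Finset (ℕ × ℕ)) (hS : ∀ x ∈ S, 0 < x.1) (n : ℕ) : (T S n).Finite := by
  refine (Set.finite_Iic (n • S.val)).subset ?_
  rintro M ⟨h1, h2⟩
  rw [Set.mem_Iic, Multiset.le_iff_count]
  intro x
  by_cases hx : x ∈ M
  · have hxS := h1 x hx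
    rw [Multiset.count_nsmul, Multiset.count_eq_one_of_mem S.nodup hxS, mul_one]
    have hc : M.card ≤ n := by
      rw [← h2, ← Multiset.card_map Prod.fst M]
      have := Multiset.card_nsmul_le_sum (s := M.map Prod.fst) (a := 1) (by
        intro y hy
        obtain ⟨z, hz, rfl⟩ := Multiset.mem_map.1 hy
        exact hS z (h1 z hz))
      simpa using this
    exact (Multiset.count_le_card x M).trans hc
  · rw [Multiset.count_eq_zero_of_notMem hx]
    exact Nat.zero_le _

noncomputable def gfT (S : Finset (ℕ × ℕ)) : PowerSeries ℤ :=
  PowerSeries.mk fun n => ((T S n).ncard : ℤ)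

lemma gfT_insert (a : ℕ × ℕ) (S : Finset (ℕ × ℕ)) (ha : a ∉ S) (ha0 : 0 < a.1)
    (hS : ∀ x ∈ S, 0 < x.1) : gfT (insert a S) * (1 - X ^ a.1) = gfT S := by
  have hS' : ∀ x ∈ insert a S, 0 < x.1 := by
    intro x hx
    rcases mem_insert.1 hx with rfl | h
    · exact ha0
    · exact hS x h
  have hinj : Function.Injective (fun M : Multiset (ℕ × ℕ) => a ::ₘ M) :=
    fun M N h => (Multiset.cons_inj_right a).1 h
  ext n
  rw [mul_sub, mul_one, map_sub, coeff_mul_X_pow', gfT, gfT, coeff_mk, coeff_mk]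
  split_ifs with hn
  · rw [coeff_mk]
    have : T (insert a S) n = T S n ∪ (fun M => a ::ₘ M) '' T (insert a S) (n - a.1) := by
      ext M
      simp only [T, Set.mem_union, Set.mem_ofPred_eq, Set.mem_image]
      constructor
      · rintro ⟨h1, h2⟩
        by_cases haM : a ∈ M
        · right
          obtain ⟨N, rfl⟩ := Multiset.exists_cons_of_mem haM
          refine ⟨N, ⟨fun x hx => h1 x (Multiset.mem_cons_of_mem hx), ?_⟩, rfl⟩
          rw [Multiset.map_cons, Multiset.sum_cons] at h2
          lia
        · left
          refine ⟨fun x hx => ?_, h2⟩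
          rcases mem_insert.1 (h1 x hx) with rfl | h
          · exact absurd hx haM
          · exact h
      · rintro (⟨h1, h2⟩ | ⟨N, ⟨h1, h2⟩, rfl⟩)
        · exact ⟨fun x hx => mem_insert_of_mem (h1 x hx), h2⟩
        · refine ⟨fun x hx => ?_, ?_⟩
          · rcases Multiset.mem_cons.1 hx with rfl | h
            · exact mem_insert_self _ _
            · exact h1 x h
          · rw [Multiset.map_cons, Multiset.sum_cons, h2]
            lia
    rw [this, Set.ncard_union_eq _ (T_finite S hS n) ((T_finite _ hS' _).image _),
      Set.ncard_image_of_injective _ hinj]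
    · push_cast; ring
    · rw [Set.disjoint_left]
      rintro M ⟨h1, -⟩ ⟨N, -, rfl⟩
      exact ha (h1 a (Multiset.mem_cons_self _ _))
  · have hT : T (insert a S) n = T S n := by
      ext M
      simp only [T, Set.mem_ofPred_eq]
      constructor
      · rintro ⟨h1, h2⟩
        refine ⟨fun x hx => ?_, h2⟩
        rcases mem_insert.1 (h1 x hx) with rfl | h
        · have := Multiset.le_sum_of_mem (Multiset.mem_map_of_mem Prod.fst hx)
          lia
        · exact h
      · rintro ⟨h1, h2⟩
        exact ⟨fun x hx => mem_insert_of_mem (h1 x hx), h2⟩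
    rw [hT, sub_zero, coeff_mk]

lemma gfT_mul (S : Finset (ℕ × ℕ)) (hS : ∀ x ∈ S, 0 < x.1) :
    gfT S * ∏ x ∈ S, (1 - X ^ x.1) = 1 := by
  induction S using Finset.induction_on with
  | empty =>
    rw [prod_empty, mul_one]
    ext n
    rw [gfT, coeff_mk, coeff_one]
    split_ifs with h
    · subst h
      have : T ∅ 0 = {0} := by
        ext M
        simp only [T, Set.mem_ofPred_eq, Set.mem_singleton_iff]
        constructor
        · rintro ⟨h1, -⟩
          exact Multiset.eq_zero_of_forall_notMem fun x hx => notMem_empty _ (h1 x hx)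
        · rintro rfl
          simp
      simp [this]
    · have : T ∅ n = ∅ := by
        ext M
        simp only [T, Set.mem_ofPred_eq, Set.mem_empty_iff_false, iff_false]
        rintro ⟨h1, h2⟩
        have : M = 0 := Multiset.eq_zero_of_forall_notMem fun x hx => notMem_empty _ (h1 x hx)
        subst this
        simp at h2
        lia
      simp [this]
  | insert a S ha ih =>
    rw [prod_insert ha, ← mul_assoc, gfT_insert a S ha (hS a (mem_insert_self _ _))
      (fun x hx => hS x (mem_insert_of_mem hx))]
    exact ih fun x hx => hS x (mem_insert_of_mem hx)

noncomputable def gfB : PowerSeries ℤ := PowerSeries.mk fun n => (coloredRegular 4 3 2 n : ℤ)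

open Classical in
noncomputable def SN (N : ℕ) : Finset (ℕ × ℕ) := ((range (N + 1)).filter cop) ×ˢ range 4

lemma SN_prod (N : ℕ) : ∏ x ∈ SN N, ((1 : PowerSeries ℤ) - X ^ x.1) =
    (∏ i ∈ range N, fac cop i) ^ 4 := by
  classical
  rw [SN, prod_product]
  simp only [prod_const, card_range]
  rw [prod_pow, prod_filter, prod_range_succ']
  simp [cop, fac]

lemma coloredRegular_eq (N n : ℕ) (h : n ≤ N) : coloredRegular 4 3 2 n = (T (SN N) n).ncard := by
  rw [coloredRegular, ← Nat.card_coe_set_eq]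
  have : T (SN N) n = {M : Multiset (ℕ × ℕ) |
      (∀ x ∈ M, ¬ 3 ∣ x.1 ∧ ¬ 2 ∣ x.1 ∧ x.2 < 4) ∧ (M.map Prod.fst).sum = n} := by
    ext M
    simp only [T, SN, cop, Set.mem_ofPred_eq, mem_product, mem_filter, mem_range]
    constructor
    · rintro ⟨h1, h2⟩
      exact ⟨fun x hx => ⟨(h1 x hx).1.2.1, (h1 x hx).1.2.2, (h1 x hx).2⟩, h2⟩
    · rintro ⟨h1, h2⟩
      refine ⟨fun x hx => ⟨⟨?_, (h1 x hx).1, (h1 x hx).2.1⟩, (h1 x hx).2.2⟩, h2⟩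
      have := Multiset.le_sum_of_mem (Multiset.mem_map_of_mem Prod.fst hx)
      lia
  rw [this]
  rfl

open Filter Topology PowerSeries.WithPiTopology in
lemma gfB_mul : gfB * E cop ^ 4 = 1 := by
  have h1 : Tendsto (fun N => gfT (SN N)) atTop (𝓝 gfB) := by
    rw [tendsto_iff_coeff_tendsto]
    intro n
    refine tendsto_atTop_of_eventually_const (i₀ := n) fun N hN => ?_
    rw [gfT, gfB, coeff_mk, coeff_mk, coloredRegular_eq N n hN]
  have h2 : Tendsto (fun N => ∏ i ∈ range N, fac cop i) atTop (𝓝 (E cop)) :=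
    (hasProd_E cop).tendsto_prod_nat
  have h3 := h1.mul (h2.pow 4)
  refine tendsto_nhds_unique h3 ?_
  have : (fun N => gfT (SN N) * (∏ i ∈ range N, fac cop i) ^ 4) = fun _ => 1 := by
    funext N
    rw [← SN_prod]
    apply gfT_mul
    intro x hx
    simp only [SN, cop, mem_product, mem_filter, mem_range] at hx
    lia
  rw [this]
  exact tendsto_const_nhds

end counting

lemma main_dvd (n : ℕ) (hn : n % 16 = 8 ∨ n % 16 = 12) : coloredRegular 4 3 2 (n + 1) ≡ 0 [MOD 8] := by
  have hu : IsUnit (E cop) := by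
    have : IsUnit (E cop ^ 4) := IsUnit.of_mul_eq_one gfB (by rw [mul_comm]; exact gfB_mul)
    exact (isUnit_pow_iff (by norm_num)).1 this
  obtain ⟨G, hG⟩ := hu.exists_left_inv
  have hB : gfB = G ^ 4 := by
    have h4 : G ^ 4 * E cop ^ 4 = 1 := by rw [← mul_pow, hG, one_pow]
    calc gfB = gfB * (G ^ 4 * E cop ^ 4) := by rw [h4, mul_one]
      _ = G ^ 4 * (gfB * E cop ^ 4) := by ring
      _ = _ := by rw [gfB_mul, mul_one]
  have hf := final_mod_two (PowerSeries.map (Int.castRingHom (ZMod 2)) G)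
    (PowerSeries.map (Int.castRingHom (ZMod 2)) (E cop))
    (by rw [← map_mul, hG, map_one]) map_E_cop n hn
  have hd : d⁄dX (ZMod 2) (PowerSeries.map (Int.castRingHom (ZMod 2)) G) =
      PowerSeries.map (Int.castRingHom (ZMod 2)) (d⁄dX ℤ G) := by
    ext m
    simp [coeff_derivative]
  rw [hd, ← map_pow, ← map_mul, coeff_map, eq_intCast, ZMod.intCast_zmod_eq_zero_iff_dvd] at hf
  obtain ⟨k, hk⟩ := hf
  have h5 := congrArg (fun f => coeff n (d⁄dX ℤ f)) hB
  simp only [derivative_pow] at h5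
  rw [coeff_derivative, gfB, coeff_mk] at h5
  have h6 : (((4 : ℕ) : PowerSeries ℤ) * G ^ (4 - 1) * d⁄dX ℤ G) =
      PowerSeries.C 4 * (G ^ 3 * d⁄dX ℤ G) := by
    rw [map_ofNat]; push_cast; ring
  rw [h6, coeff_C_mul, hk] at h5
  rw [Nat.modEq_zero_iff_dvd]
  have h8 : 8 ∣ coloredRegular 4 3 2 (n + 1) * (n + 1) := by
    zify
    exact ⟨k, by rw [h5]; push_cast; ring⟩
  refine Nat.Coprime.dvd_of_dvd_mul_right ?_ h8
  have : Nat.Coprime 2 (n + 1) := by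
    rw [Nat.coprime_two_left]
    exact Nat.odd_iff.2 (by lia)
  exact Nat.Coprime.pow_left 3 this

theorem stmt_10 (n : ℕ) :
    coloredRegular 4 3 2 (16 * n + 9) ≡ 0 [MOD 8] ∧
    coloredRegular 4 3 2 (16 * n + 13) ≡ 0 [MOD 8] :=
  ⟨main_dvd (16 * n + 8) (by lia), main_dvd (16 * n + 12) (by lia)⟩
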